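/- Let α ∈ ℝ and let ρ be a nonzero σ-finite measure on (0,∞) such that ∫₀^∞ (y^{α−δ} ∨ y^{α+δ}) ρ(dy) < ∞ for some δ > 0, with an atom w₀ = ρ({x₀}) > 0 at some x₀ > 0, and suppose ∫_{y ≠ x₀} y^α ρ(dy) = w₀ x₀^α. Then ρ fails to have the cancellation property with respect to {ν_α} if and only if there exists θ₀ > 0 such that ρ(S_{x₀}^c) = 0, where S_{x₀} = {x₀} ∪ {x₀ e^{π(2k+1)/θ₀} : k ∈ ℤ}. -/

import Mathlib

/-!
In logarithmic coordinates, tilting a measure `ν` on `(0, ∞)` by `y ^ α` (`logTilt`) turns `⊛` into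
additive convolution and `ν_α` into a multiple `c · Lebesgue` of Lebesgue measure. The hypothesis on
`ρ` says that its tilted image has an atom at `s₀ = log x₀` carrying exactly half of the (finite)
mass.

Suppose `N ≠ c · Lebesgue` has the same convolution with this image as `c · Lebesgue`. After
normalization, `N + N ⋆ κ = 2c · Lebesgue` for a probability measure `κ`, the translated rest of the
mass. So `N ≤ 2c · Lebesgue`, and for suitable `l` the function `G t = N (t, t + l] - c l` is
bounded, continuous, not identically zero and satisfies `G ⋆ κ = -G`. A Choquet–Deny argument
(`ae_antiperiod_of_antiharmonic`) shows that `κ`-almost every `y` satisfies `G (t - y) = -G t` for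
all `t`, and the structure of subgroups of `ℝ` (`exists_theta`) places such `y` in
`{π (2 k + 1) / θ}`.

Conversely, if the image of `ρ` is concentrated on `{s₀} ∪ {s₀ + π (2 k + 1) / θ}`, then multiplying
`ν_α` by `1 + cos (θ log x)` does not change the convolution, since the contributions of the cosine
from the atom and from the rest cancel (`conv_eq_of_concentrated`).
-/


open MeasureTheory Set Filter ProbabilityTheory
open scoped ENNReal Topology

noncomputable section

/-- Multiplicative convolution of two measures (on `(0,∞)`, modeled as measures on `ℝ`):
`(ν ⊛ ρ)(B) = ∫ ν(x⁻¹ B) ρ(dx)`. -/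
def mulConv (ν ρ : Measure ℝ) : Measure ℝ :=
  ρ.bind fun x => ν.map fun y => x * y

/-- The measure `ν_α` on `(0,∞)`, with density `|α| x^{-(α+1)}` w.r.t. Lebesgue measure
when `α ≠ 0`, and density `x⁻¹` when `α = 0`. -/
def nuAlpha (α : ℝ) : Measure ℝ :=
  (volume.restrict (Ioi (0:ℝ))).withDensity fun x =>
    ENNReal.ofReal (if α = 0 then x⁻¹ else |α| * x ^ (-(α + 1)))

/-- `L` is slowly varying at infinity: `L(cx)/L(x) → 1` as `x → ∞`, for every `c > 0`. -/
def SlowlyVarying (L : ℝ → ℝ) : Prop :=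
  ∀ c : ℝ, 0 < c → Tendsto (fun x => L (c * x) / L x) atTop (nhds 1)

/-- The measure `μ` has a regularly varying (right) tail with exponent `α`:
`μ(x,∞) = x^{-α} L(x)` for all `x > 0`, where `L` is slowly varying
(and eventually positive) at infinity. -/
def HasRegVarTail (μ : Measure ℝ) (α : ℝ) : Prop :=
  ∃ L : ℝ → ℝ, SlowlyVarying L ∧ (∀ᶠ x in atTop, 0 < L x) ∧
    ∀ x : ℝ, 0 < x → μ (Ioi x) = ENNReal.ofReal (x ^ (-α) * L x)

/-- The moment condition `∫₀^∞ (y^{α-δ} ∨ y^{α+δ}) ρ(dy) < ∞`. -/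
def MomentCond (ρ : Measure ℝ) (α δ : ℝ) : Prop :=
  ∫⁻ y in Ioi (0:ℝ), ENNReal.ofReal (max (y ^ (α - δ)) (y ^ (α + δ))) ∂ρ < ⊤

/-- The nonvanishing condition `∫₀^∞ y^{α+iθ} ρ(dy) ≠ 0` for all `θ ∈ ℝ`. -/
def MellinNonvanishing (ρ : Measure ℝ) (α : ℝ) : Prop :=
  ∀ θ : ℝ, (∫ y in Ioi (0:ℝ), (y : ℂ) ^ ((α : ℂ) + (θ : ℂ) * Complex.I) ∂ρ) ≠ 0

/-- `ρ` has the cancellation property with respect to `{ν_α}`: for every σ-finite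
measure `ν` on `(0,∞)`, `ν ⊛ ρ = ν_α ⊛ ρ` implies `ν = ν_α`. -/
def HasCancellation (ρ : Measure ℝ) (α : ℝ) : Prop :=
  ∀ ν : Measure ℝ, SigmaFinite ν → ν (Iic 0) = 0 →
    mulConv ν ρ = mulConv (nuAlpha α) ρ → ν = nuAlpha α

/-- Condition (2.18): `lim_{b↓0} limsup_{x→∞} (∫₀^b ρ(x/y,∞) ν(dy)) / ((ν⊛ρ)(x,∞)) = 0`. -/
def Cond218 (ν ρ : Measure ℝ) : Prop :=
  Tendsto (fun b : ℝ =>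
      limsup (fun x : ℝ =>
        (∫⁻ y in Ioc (0:ℝ) b, ρ (Ioi (x / y)) ∂ν).toReal
          / ((mulConv ν ρ) (Ioi x)).toReal) atTop)
    (nhdsWithin 0 (Ioi 0)) (nhds 0)

/-! ### Bounded anti-harmonic functions -/

/-- A sign-twisted Choquet–Deny theorem: a bounded solution of `G ⋆ κ = -G` has almost every
point of `κ` as an antiperiod. The defect `h t = ∫ (G (t - y) + G t)² dκ = (G² ⋆ κ - G²) t`
satisfies `h ≤ h ⋆ κ` by Jensen's inequality, because each `t ↦ G (t - y) + G t` again solves the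
equation. Iterating, `G² ⋆ κⁿ ≥ G² + n h`, and boundedness forces `h = 0`. -/
lemma ae_antiperiod_of_antiharmonic (κ : Measure ℝ) [IsProbabilityMeasure κ] (G : ℝ → ℝ) (hGm : Measurable G) (C : ℝ)
    (hC : ∀ t, |G t| ≤ C) (hG : ∀ t, ∫ y, G (t - y) ∂κ = -G t) (t : ℝ) :
    ∀ᵐ y ∂κ, G (t - y) = -G t := by
  have hInt : ∀ (f : ℝ → ℝ) (D : ℝ), Measurable f → (∀ x, |f x| ≤ D) → Integrable f κ :=
    fun f D hf hD => Integrable.of_bound hf.aestronglyMeasurable D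
      (Eventually.of_forall fun x => by simpa using hD x)
  have hGint : ∀ t, Integrable (fun y => G (t - y)) κ := fun t =>
    hInt _ C (by fun_prop) fun _ => hC _
  set h : ℝ → ℝ := fun t => ∫ y, (G (t - y) + G t) ^ 2 ∂κ with hdef
  have hk : ∀ a b, |(G a + G b) ^ 2| ≤ (2 * C) ^ 2 := fun a b => by
    have h1 := abs_le.1 (hC a)
    have h2 := abs_le.1 (hC b)
    rw [abs_of_nonneg (sq_nonneg _)]
    exact sq_le_sq' (by linarith) (by linarith)
  have hG2 : ∀ a, (G a) ^ 2 ≤ C ^ 2 := fun a => by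
    have h1 := abs_le.1 (hC a)
    exact sq_le_sq' (by linarith) (by linarith)
  have hmeas : ∀ u : ℝ → ℝ, Measurable u → Measurable fun t => ∫ y, u (t - y) ∂κ := fun u hu =>
    (StronglyMeasurable.integral_prod_right (f := fun (t : ℝ) (y : ℝ) => u (t - y))
      (by apply Measurable.stronglyMeasurable; fun_prop)).measurable
  have hhm : Measurable h :=
    (StronglyMeasurable.integral_prod_right (f := fun (t : ℝ) (y : ℝ) => (G (t - y) + G t) ^ 2)
      (by apply Measurable.stronglyMeasurable; fun_prop)).measurable
  have hh0 : ∀ t, 0 ≤ h t := fun t => integral_nonneg fun y => sq_nonneg _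
  have hhb : ∀ t, |h t| ≤ (2 * C) ^ 2 := fun t => by
    have := norm_integral_le_of_norm_le_const (μ := κ) (C := (2 * C) ^ 2)
      (f := fun y => (G (t - y) + G t) ^ 2) (Eventually.of_forall fun y => hk _ _)
    simpa using this
  have hsq : ∀ t, h t = ∫ y, G (t - y) ^ 2 ∂κ - G t ^ 2 := fun t => by
    have i1 : Integrable (fun y => G (t - y) ^ 2) κ := hInt _ (C ^ 2) (by fun_prop) fun y => by
      rw [abs_of_nonneg (sq_nonneg _)]; exact hG2 _
    have : h t = ∫ y, (G (t - y) ^ 2 + (2 * G t * G (t - y) + G t ^ 2)) ∂κ := by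
      apply integral_congr_ae; exact Eventually.of_forall fun y => by simp only; ring
    have i2 : Integrable (fun y => 2 * G t * G (t - y) + G t ^ 2) κ :=
      ((hGint t).const_mul _).add (integrable_const _)
    rw [this, integral_add i1 i2,
      integral_add ((hGint t).const_mul _) (integrable_const _), integral_const_mul, hG]
    simp; ring
  have hjensen : ∀ y t, (G (t - y) + G t) ^ 2 ≤ ∫ z, (G (t - z - y) + G (t - z)) ^ 2 ∂κ := by
    intro y t
    have i1 : Integrable (fun z => G (t - z - y)) κ := hInt _ C (by fun_prop) fun _ => hC _
    have e : ∫ z, (G (t - z - y) + G (t - z)) ∂κ = -(G (t - y) + G t) := by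
      rw [integral_add i1 (hGint t), hG]
      have := hG (t - y)
      simp_rw [show ∀ z, t - z - y = t - y - z from fun z => by ring]
      rw [this]; ring
    have := (even_two.convexOn_pow (𝕜 := ℝ)).map_integral_le (μ := κ)
      (f := fun z => G (t - z - y) + G (t - z)) (by fun_prop) isClosed_univ (by simp)
      (i1.add (hGint t)) (hInt _ ((2 * C) ^ 2) (by simp only [Function.comp_def]; fun_prop) fun _ => hk _ _)
    rw [e, neg_sq] at this
    exact this
  -- Integrate the previous inequality in `y` and exchange the integrals.
  have hsub : ∀ t, h t ≤ ∫ z, h (t - z) ∂κ := by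
    intro t
    have hprod : Integrable (Function.uncurry fun z y => (G (t - z - y) + G (t - z)) ^ 2)
        (κ.prod κ) := Integrable.of_bound
          (by apply Measurable.aestronglyMeasurable; unfold Function.uncurry; fun_prop) ((2 * C) ^ 2)
          (Eventually.of_forall fun p => hk _ _)
    simp only [hdef]
    rw [integral_integral_swap hprod]
    refine integral_mono (hInt _ _ (by fun_prop) fun _ => hk _ _) hprod.integral_prod_right ?_
    intro y
    exact hjensen y t
  -- The witness `u` for `n` is `G² ⋆ κⁿ`.
  have key : ∀ n : ℕ, ∃ u : ℝ → ℝ, Measurable u ∧ (∀ t, |u t| ≤ C ^ 2) ∧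
      (∀ t, u t + h t ≤ ∫ y, u (t - y) ∂κ) ∧ ∀ t, n * h t ≤ u t := by
    intro n
    induction n with
    | zero =>
      refine ⟨fun t => G t ^ 2, by fun_prop, fun t => ?_, fun t => ?_, fun t => ?_⟩
      · rw [abs_of_nonneg (sq_nonneg _)]; exact hG2 _
      · rw [hsq]; simp
      · simp; positivity
    | succ n ih =>
      obtain ⟨u, hum, hub, hu1, hu2⟩ := ih
      refine ⟨fun t => ∫ y, u (t - y) ∂κ, hmeas u hum, fun t => ?_, fun t => ?_, fun t => ?_⟩
      · have := norm_integral_le_of_norm_le_const (μ := κ) (C := C ^ 2)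
          (f := fun y => u (t - y)) (Eventually.of_forall fun y => hub _)
        simpa using this
      · have iu : Integrable (fun y => u (t - y)) κ := hInt _ _ (by fun_prop) fun _ => hub _
        have ih : Integrable (fun y => h (t - y)) κ := hInt _ _ (by fun_prop) fun _ => hhb _
        calc _ ≤ ∫ y, u (t - y) ∂κ + ∫ y, h (t - y) ∂κ := by gcongr; exact hsub t
          _ = ∫ y, (u (t - y) + h (t - y)) ∂κ := (integral_add iu ih).symm
          _ ≤ _ := by
            refine integral_mono (iu.add ih) ?_ fun y => hu1 _
            refine hInt _ (C ^ 2) ((hmeas u hum).comp (by fun_prop)) fun y => ?_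
            have := norm_integral_le_of_norm_le_const (μ := κ) (C := C ^ 2)
              (f := fun z => u (t - y - z)) (Eventually.of_forall fun y => hub _)
            simpa using this
      · have := hu1 t
        have := hu2 t
        push_cast
        linarith
  have hz : h t = 0 := by
    refine le_antisymm ?_ (hh0 t)
    by_contra! hpos
    obtain ⟨n, hn⟩ := exists_nat_gt (C ^ 2 / h t)
    obtain ⟨u, -, hub, -, hu⟩ := key n
    rw [div_lt_iff₀ hpos] at hn
    linarith [hu t, (abs_le.1 (hub t)).2]
  have := (integral_eq_zero_iff_of_nonneg (fun y => sq_nonneg _)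
    (hInt (fun y => (G (t - y) + G t) ^ 2) ((2 * C) ^ 2) (by fun_prop) fun _ => hk _ _)).1 hz
  filter_upwards [this] with y hy
  have : G (t - y) + G t = 0 := by simpa using hy
  linarith

/-! ### Passage to logarithmic coordinates -/

/-- The image under `log` of the measure `y ^ α ν(dy)`. It is used only for measures `ν` that do
not charge `(-∞, 0]`, where the conventions for `log` and real powers play no role. -/
def logTilt (α : ℝ) (ν : Measure ℝ) : Measure ℝ :=
  (ν.withDensity fun y => ENNReal.ofReal (y ^ α)).map Real.log

instance (α : ℝ) (ν : Measure ℝ) [SFinite ν] : SFinite (logTilt α ν) := by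
  unfold logTilt; infer_instance

lemma lintegral_logTilt (α : ℝ) (ν : Measure ℝ) {φ : ℝ → ℝ≥0∞} (hφ : Measurable φ) :
    ∫⁻ t, φ t ∂(logTilt α ν) = ∫⁻ y, ENNReal.ofReal (y ^ α) * φ (Real.log y) ∂ν := by
  unfold logTilt
  rw [lintegral_map hφ Real.measurable_log,
    lintegral_withDensity_eq_lintegral_mul _ (by fun_prop) (by fun_prop)]
  rfl

lemma ae_pos {ν : Measure ℝ} (h : ν (Iic 0) = 0) : ∀ᵐ y ∂ν, 0 < y := by
  rw [ae_iff]; convert h using 2; ext; simp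

/-- A measure on `(0, ∞)` is recovered from its tilted image by undoing the tilt. -/
lemma logTilt_recover (α : ℝ) {ν : Measure ℝ} (h : ν (Iic 0) = 0) {B : Set ℝ}
    (hB : MeasurableSet B) :
    ν B = ∫⁻ t, ENNReal.ofReal (Real.exp (-(α * t))) * B.indicator 1 (Real.exp t)
      ∂(logTilt α ν) := by
  have hm : Measurable (B.indicator (1 : ℝ → ℝ≥0∞)) := measurable_one.indicator hB
  rw [lintegral_logTilt _ _ (by fun_prop), ← lintegral_indicator_one hB]
  refine lintegral_congr_ae ?_
  filter_upwards [ae_pos h] with y hy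
  rw [Real.exp_log hy, ← mul_assoc, ← ENNReal.ofReal_mul (by positivity),
    Real.rpow_def_of_pos hy, ← Real.exp_add]
  simp [mul_comm]

lemma logTilt_injective (α : ℝ) {ν ν' : Measure ℝ} (h : ν (Iic 0) = 0) (h' : ν' (Iic 0) = 0)
    (e : logTilt α ν = logTilt α ν') : ν = ν' := by
  ext B hB
  rw [logTilt_recover α h hB, logTilt_recover α h' hB, e]

lemma measurable_map_mul (ν : Measure ℝ) [SFinite ν] :
    Measurable fun x : ℝ => ν.map fun y => x * y := by
  refine Measure.measurable_of_measurable_coe _ fun s hs => ?_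
  have : (fun x : ℝ => ν.map (fun y => x * y) s) =
      fun x => ν (Prod.mk x ⁻¹' ((fun p : ℝ × ℝ => p.1 * p.2) ⁻¹' s)) := by
    ext x
    rw [Measure.map_apply (by fun_prop) hs]
    rfl
  rw [this]
  exact measurable_measure_prodMk_left (measurable_mul hs)

lemma lintegral_mulConv (ν ρ : Measure ℝ) [SFinite ν] {φ : ℝ → ℝ≥0∞} (hφ : Measurable φ) :
    ∫⁻ z, φ z ∂(mulConv ν ρ) = ∫⁻ x, ∫⁻ y, φ (x * y) ∂ν ∂ρ := by
  unfold mulConv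
  rw [Measure.lintegral_bind (measurable_map_mul ν).aemeasurable hφ.aemeasurable]
  refine lintegral_congr fun x => ?_
  rw [lintegral_map hφ (by fun_prop)]

lemma mulConv_Iic (ν ρ : Measure ℝ) [SFinite ν] (h : ν (Iic 0) = 0) (h' : ρ (Iic 0) = 0) :
    mulConv ν ρ (Iic 0) = 0 := by
  rw [← lintegral_indicator_one measurableSet_Iic,
    lintegral_mulConv _ _ (measurable_one.indicator measurableSet_Iic)]
  refine (lintegral_congr_ae ?_).trans lintegral_zero
  filter_upwards [ae_pos h'] with x hx
  refine (lintegral_congr_ae ?_).trans lintegral_zero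
  filter_upwards [ae_pos h] with y hy
  simp [mul_pos hx hy]

/-- The tilt is multiplicative in `y`, so it is compatible with convolutions. -/
lemma logTilt_mulConv (α : ℝ) (ν ρ : Measure ℝ) [SFinite ν] [SFinite ρ] (h : ν (Iic 0) = 0)
    (h' : ρ (Iic 0) = 0) :
    logTilt α (mulConv ν ρ) = (logTilt α ρ).conv (logTilt α ν) := by
  refine Measure.ext_of_lintegral _ fun φ hφ => ?_
  rw [lintegral_logTilt _ _ hφ, lintegral_mulConv _ _ (by fun_prop), Measure.lintegral_conv hφ,
    lintegral_logTilt _ _ (by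
      exact Measurable.lintegral_prod_right' (f := fun p : ℝ × ℝ => φ (p.1 + p.2)) (by fun_prop))]
  refine lintegral_congr_ae ?_
  filter_upwards [ae_pos h'] with x hx
  rw [lintegral_logTilt _ _ (by fun_prop), ← lintegral_const_mul _ (by fun_prop)]
  refine lintegral_congr_ae ?_
  filter_upwards [ae_pos h] with y hy
  rw [Real.mul_rpow hx.le hy.le, ENNReal.ofReal_mul (by positivity),
    Real.log_mul hx.ne' hy.ne', mul_assoc]

lemma mulConv_eq_iff (α : ℝ) (ν ν' ρ : Measure ℝ) [SFinite ν] [SFinite ν'] [SFinite ρ]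
    (h : ν (Iic 0) = 0) (h' : ν' (Iic 0) = 0) (hρ : ρ (Iic 0) = 0) :
    mulConv ν ρ = mulConv ν' ρ ↔
      (logTilt α ρ).conv (logTilt α ν) = (logTilt α ρ).conv (logTilt α ν') := by
  rw [← logTilt_mulConv α ν ρ h hρ, ← logTilt_mulConv α ν' ρ h' hρ]
  exact ⟨fun e => by rw [e],
    logTilt_injective α (mulConv_Iic _ _ h hρ) (mulConv_Iic _ _ h' hρ)⟩

/-- The constant in front of `x ^ (-(α + 1))` in the density of `ν_α`, including `α = 0`. -/
def nuConst (α : ℝ) : ℝ := if α = 0 then 1 else |α|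

lemma nuConst_pos (α : ℝ) : 0 < nuConst α := by
  unfold nuConst; split_ifs with h
  · exact one_pos
  · exact abs_pos.2 h

lemma nuAlpha_Iic (α : ℝ) : nuAlpha α (Iic 0) = 0 := by
  unfold nuAlpha
  refine withDensity_absolutelyContinuous _ _ ?_
  rw [Measure.restrict_apply measurableSet_Iic, Iic_inter_Ioi, Ioc_self, measure_empty]

instance (α : ℝ) : SigmaFinite (nuAlpha α) := by
  unfold nuAlpha
  exact SigmaFinite.withDensity_ofReal _

/-- In logarithmic coordinates `ν_α` becomes a multiple of Lebesgue measure. -/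
lemma logTilt_nuAlpha (α : ℝ) :
    logTilt α (nuAlpha α) = ENNReal.ofReal (nuConst α) • (volume : Measure ℝ) := by
  refine Measure.ext_of_lintegral _ fun φ hφ => ?_
  have hm : Measurable fun x : ℝ =>
      ENNReal.ofReal (if α = 0 then x⁻¹ else |α| * x ^ (-(α + 1))) := by
    split_ifs <;> fun_prop
  rw [lintegral_logTilt _ _ hφ, lintegral_smul_measure, nuAlpha,
    lintegral_withDensity_eq_lintegral_mul _ hm (by fun_prop)]
  have himg : Ioi (0:ℝ) = Real.exp '' univ := by simp
  rw [himg, lintegral_image_eq_lintegral_abs_deriv_mul MeasurableSet.univ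
    (fun x _ => (Real.hasDerivAt_exp x).hasDerivWithinAt) Real.exp_injective.injOn,
    Measure.restrict_univ, smul_eq_mul, ← lintegral_const_mul _ hφ]
  refine lintegral_congr fun t => ?_
  simp only [Pi.mul_apply, Real.log_exp, Real.abs_exp]
  rw [← mul_assoc, ← mul_assoc, ← ENNReal.ofReal_mul (by positivity),
    ← ENNReal.ofReal_mul (by split_ifs <;> positivity)]
  congr 2
  have e : (if α = 0 then (Real.exp t)⁻¹ else |α| * Real.exp t ^ (-(α + 1))) =
      nuConst α * Real.exp t ^ (-(α + 1)) := by
    unfold nuConst; split_ifs with h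
    · simp [h, Real.rpow_neg_one]
    · rfl
  rw [e, ← Real.exp_mul, ← Real.exp_mul, mul_left_comm, mul_assoc, mul_assoc, ← Real.exp_add,
    ← Real.exp_add]
  ring_nf
  simp

/-- The periods of `G` form a subgroup `P` of `ℝ`, and an antiperiod is never a period while the
sum of two antiperiods is. Hence `P` is not dense, so it is cyclic, and the antiperiods are odd
multiples of half its generator. -/
lemma exists_theta (κ : Measure ℝ) [IsProbabilityMeasure κ] (G : ℝ → ℝ) (hGc : Continuous G)
    (a : ℝ) (ha : G a ≠ 0) (hG : ∀ t, ∀ᵐ y ∂κ, G (t - y) = -G t) :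
    ∃ θ : ℝ, 0 < θ ∧ ∀ᵐ y ∂κ, ∃ k : ℤ, y = Real.pi * (2 * k + 1) / θ := by
  -- By continuity it suffices to treat the countably many rational `t`.
  have hA : ∀ᵐ y ∂κ, ∀ t, G (t - y) = -G t := by
    have h1 : ∀ᵐ y ∂κ, ∀ q : ℚ, G (q - y) = -G q := ae_all_iff.2 fun q => hG q
    filter_upwards [h1] with y hy t
    have : (fun t => G (t - y)) = fun t => -G t :=
      Rat.isDenseEmbedding_coe_real.dense.equalizer (by fun_prop) (by fun_prop)
        (funext fun q => hy q)
    exact congrFun this t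
  let P : AddSubgroup ℝ :=
    { carrier := {p | ∀ t, G (t + p) = G t}
      zero_mem' := fun t => by simp
      add_mem' := fun {p q} hp hq t => by rw [← add_assoc, hq, hp]
      neg_mem' := fun {p} hp t => by
        have := hp (t + -p)
        rwa [neg_add_cancel_right, eq_comm] at this }
  have hPA : ∀ y, (∀ t, G (t - y) = -G t) → y ∉ P := fun y hy hyP => by
    have h1 := hyP (a - y)
    rw [sub_add_cancel, hy] at h1
    exact ha (by linarith)
  have hAA : ∀ y z, (∀ t, G (t - y) = -G t) → (∀ t, G (t - z) = -G t) → y + z ∈ P :=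
    fun y z hy hz t => by
      have h1 := hy (t + (y + z))
      have h2 := hz (t + z)
      rw [show t + (y + z) - y = t + z by ring] at h1
      rw [add_sub_cancel_right] at h2
      linarith
  obtain ⟨b, hb⟩ : ∃ b, ∀ t, G (t - b) = -G t := hA.exists
  rcases P.dense_or_cyclic with hd | ⟨p, hp⟩
  · exfalso
    refine hPA b hb fun t => ?_
    have : (fun p => G (t + p)) = fun _ => G t :=
      Continuous.ext_on hd (by fun_prop) (by fun_prop) fun p hp => hp t
    exact congrFun this b
  · have hmem : ∀ x, x ∈ P ↔ ∃ n : ℤ, n * p = x := fun x => by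
      rw [hp, AddSubgroup.mem_closure_singleton]; simp
    -- Twice an antiperiod is a multiple of the generator, and an odd one since `y ∉ P`.
    have hodd : ∀ y, (∀ t, G (t - y) = -G t) → ∃ k : ℤ, y = (2 * k + 1) * p / 2 := fun y hy => by
      obtain ⟨n, hn⟩ := (hmem _).1 (hAA y y hy hy)
      rcases Int.even_or_odd' n with ⟨k, rfl | rfl⟩
      · refine absurd ((hmem y).2 ⟨k, ?_⟩) (hPA y hy)
        push_cast at hn; linarith
      · exact ⟨k, by push_cast at hn; linarith⟩
    have hp0 : p ≠ 0 := by
      rintro rfl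
      obtain ⟨k, hk⟩ := hodd b hb
      exact hPA b hb (by rw [hk]; simp)
    have hpa : 0 < |p| := abs_pos.2 hp0
    refine ⟨2 * Real.pi / |p|, by positivity, ?_⟩
    filter_upwards [hA] with y hy
    obtain ⟨k, hk⟩ := hodd y hy
    have hpi := Real.pi_ne_zero
    rcases abs_choice p with h | h
    · refine ⟨k, ?_⟩
      rw [h, hk]; field_simp
    -- The generator `p` is negative here, and `-(2k + 1) = 2(-k - 1) + 1`.
    · refine ⟨-k - 1, ?_⟩
      rw [h, hk]; push_cast; field_simp; ring

/-! ### The additive convolution equation -/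

/-- If `N + N ⋆ κ = 2c · Lebesgue` and `N ≠ c · Lebesgue`, then `κ` lives on the odd multiples
of some `π / θ`. The equation gives `N ≤ 2c · Lebesgue`, so `t ↦ N (t, t + l] - c l` is bounded and
continuous, and it is anti-harmonic for `κ`. -/
lemma concentrated_of_conv_eq (κ : Measure ℝ) [IsProbabilityMeasure κ] (N : Measure ℝ) [SFinite N]
    (c : ℝ) (hc : 0 < c)
    (hN : ∀ B, MeasurableSet B → N B + ∫⁻ y, N ((fun z => z + y) ⁻¹' B) ∂κ =
      2 * ENNReal.ofReal c * volume B)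
    (hne : N ≠ ENNReal.ofReal c • (volume : Measure ℝ)) :
    ∃ θ : ℝ, 0 < θ ∧ ∀ᵐ y ∂κ, ∃ k : ℤ, y = Real.pi * (2 * k + 1) / θ := by
  have hle : ∀ B, MeasurableSet B → N B ≤ 2 * ENNReal.ofReal c * volume B := fun B hB => by
    rw [← hN B hB]; exact le_self_add
  have hIoc : ∀ a b, N (Ioc a b) ≤ 2 * ENNReal.ofReal c * ENNReal.ofReal (b - a) := fun a b => by
    simpa using hle _ measurableSet_Ioc
  have hfin : ∀ a b, N (Ioc a b) ≠ ⊤ := fun a b =>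
    ((hIoc a b).trans_lt (by finiteness)).ne
  have : IsLocallyFiniteMeasure N := ⟨fun x => ⟨Ioc (x - 1) (x + 1),
    Ioc_mem_nhds (by linarith) (by linarith), (hfin _ _).lt_top⟩⟩
  have : NullSingletonClass N := ⟨fun x => by simpa using hle {x} (measurableSet_singleton x)⟩
  -- The window length `l = b - a` is chosen so that the resulting function does not vanish.
  obtain ⟨a, b, hab, hneq⟩ : ∃ a b, a < b ∧
      N (Ioc a b) ≠ (ENNReal.ofReal c • (volume : Measure ℝ)) (Ioc a b) := by
    by_contra! h
    exact hne (Measure.ext_of_Ioc _ _ fun a b hab => h a b hab)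
  set l := b - a with hl
  have hl0 : 0 < l := sub_pos.2 hab
  set n : ℝ → ℝ := fun t => (N (Ioc t (t + l))).toReal with hn
  have hncont : Continuous n := by
    have hInt : ∀ a b, IntervalIntegrable (fun _ => (1:ℝ)) N a b := fun a b =>
      intervalIntegrable_const
    have hprim := intervalIntegral.continuous_primitive hInt 0
    have : n = fun t => (∫ x in (0:ℝ)..(t + l), (1:ℝ) ∂N) - ∫ x in (0:ℝ)..t, (1:ℝ) ∂N := by
      ext t
      rw [intervalIntegral.integral_interval_sub_left (hInt _ _) (hInt _ _),
        intervalIntegral.integral_of_le (by linarith)]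
      simp [hn, Measure.real]
    rw [this]
    exact (hprim.comp (by fun_prop)).sub hprim
  have hn0 : ∀ t, 0 ≤ n t := fun t => ENNReal.toReal_nonneg
  have hnb : ∀ t, n t ≤ 2 * c * l := fun t => by
    have := ENNReal.toReal_mono (by finiteness) (hIoc t (t + l))
    simpa [ENNReal.toReal_ofReal, hc.le, hl0.le] using this
  have hInt : ∀ t, Integrable (fun y => n (t - y)) κ := fun t =>
    Integrable.of_bound (by
      apply Continuous.aestronglyMeasurable; fun_prop) (2 * c * l)
      (Eventually.of_forall fun y => by
        rw [Real.norm_of_nonneg (hn0 _)]; exact hnb _)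
  have heq : ∀ t, n t + ∫ y, n (t - y) ∂κ = 2 * c * l := fun t => by
    have h1 := hN (Ioc t (t + l)) measurableSet_Ioc
    have h2 : ∀ y, (fun z => z + y) ⁻¹' Ioc t (t + l) = Ioc (t - y) (t - y + l) := fun y => by
      rw [preimage_add_const_Ioc]; congr 1; ring
    simp_rw [h2] at h1
    have h3 : ∫⁻ y, N (Ioc (t - y) (t - y + l)) ∂κ = ENNReal.ofReal (∫ y, n (t - y) ∂κ) := by
      rw [ofReal_integral_eq_lintegral_ofReal (hInt t) (Eventually.of_forall fun y => hn0 _)]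
      refine lintegral_congr fun y => ?_
      rw [hn, ENNReal.ofReal_toReal (hfin _ _)]
    have h4 := congrArg ENNReal.toReal h1
    rw [h3, ENNReal.toReal_add (hfin _ _) ENNReal.ofReal_ne_top,
      ENNReal.toReal_ofReal (integral_nonneg fun y => hn0 _)] at h4
    simpa [ENNReal.toReal_ofReal, hc.le, hl0.le] using h4
  refine exists_theta κ (fun t => n t - c * l) (by fun_prop) a ?_
    (ae_antiperiod_of_antiharmonic κ (fun t => n t - c * l) (by fun_prop) (c * l) ?_ ?_)
  · intro h
    apply hneq
    rw [Measure.smul_apply, Real.volume_Ioc, ← hl, smul_eq_mul, ← ENNReal.ofReal_mul hc.le,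
      ← sub_eq_zero.1 h, hn, ENNReal.ofReal_toReal (hfin _ _)]
    simp [hl]
  · intro t
    rw [abs_le]
    constructor <;> linarith [hn0 t, hnb t]
  · intro t
    rw [integral_sub (hInt t) (integrable_const _)]
    simp
    linarith [heq t]

section
variable (μ : Measure ℝ) (s₀ : ℝ)

lemma lintegral_split (f : ℝ → ℝ≥0∞) :
    ∫⁻ s, f s ∂μ = μ {s₀} * f s₀ + ∫⁻ s in {s₀}ᶜ, f s ∂μ := by
  rw [← lintegral_add_compl f (measurableSet_singleton s₀), lintegral_singleton, mul_comm]

/-- Failure of uniqueness forces concentration, for a measure whose atom at `s₀` carries half of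
its mass. Dividing by the atom and translating it to the origin reduces the convolution equation
to that of `concentrated_of_conv_eq`. -/
lemma concentrated_of_ne [SFinite μ] (hr : μ {s₀} ≠ 0) (hr' : μ {s₀} ≠ ⊤) (hR : μ {s₀}ᶜ = μ {s₀})
    (c : ℝ) (hc : 0 < c) (N : Measure ℝ) [SFinite N]
    (he : μ.conv N = μ.conv (ENNReal.ofReal c • (volume : Measure ℝ)))
    (hne : N ≠ ENNReal.ofReal c • (volume : Measure ℝ)) :
    ∃ θ : ℝ, 0 < θ ∧ ∀ᵐ s ∂μ, s = s₀ ∨ ∃ k : ℤ, s = s₀ + Real.pi * (2 * k + 1) / θ := by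
  set κ : Measure ℝ := ((μ {s₀})⁻¹ • μ.restrict {s₀}ᶜ).map fun s => s - s₀ with hκ
  have hprob : IsProbabilityMeasure κ := ⟨by
    rw [hκ, Measure.map_apply (by fun_prop) MeasurableSet.univ]
    simp [hR, ENNReal.inv_mul_cancel hr hr']⟩
  have hconv : ∀ (M : Measure ℝ) [SFinite M] (B : Set ℝ), MeasurableSet B →
      ∫⁻ z, B.indicator 1 (z - s₀) ∂(μ.conv M) =
        μ {s₀} * (M B + ∫⁻ y, M ((fun z => z + y) ⁻¹' B) ∂κ) := by
    intro M _ B hB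
    have hm : Measurable (B.indicator (1 : ℝ → ℝ≥0∞)) := measurable_one.indicator hB
    have hi : ∀ s, ∫⁻ t, B.indicator (1 : ℝ → ℝ≥0∞) (s + t - s₀) ∂M =
        M ((fun z => z + (s - s₀)) ⁻¹' B) := fun s => by
      rw [← lintegral_indicator_one (hB.preimage (by fun_prop))]
      refine lintegral_congr fun t => ?_
      rw [show s + t - s₀ = t + (s - s₀) by ring]
      rfl
    have hmm : Measurable fun y => M ((fun z => z + y) ⁻¹' B) :=
      measurable_measure_prodMk_left (ν := M)
        (s := (fun p : ℝ × ℝ => p.2 + p.1) ⁻¹' B) (hB.preimage (by fun_prop))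
    rw [Measure.lintegral_conv (by fun_prop)]
    simp_rw [hi]
    rw [lintegral_split μ s₀, hκ, lintegral_map hmm (by fun_prop), lintegral_smul_measure,
      mul_add, smul_eq_mul, ← mul_assoc, ENNReal.mul_inv_cancel hr hr', one_mul]
    simp
  have hN : ∀ B, MeasurableSet B → N B + ∫⁻ y, N ((fun z => z + y) ⁻¹' B) ∂κ =
      2 * ENNReal.ofReal c * volume B := fun B hB => by
    have h1 := hconv N B hB
    rw [he, hconv _ B hB] at h1
    rw [← (ENNReal.mul_right_inj hr hr').1 h1]
    simp only [Measure.smul_apply, measure_preimage_add_right, smul_eq_mul, lintegral_const,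
      measure_univ]
    ring
  obtain ⟨θ, hθ, h⟩ := concentrated_of_conv_eq κ N c hc hN hne
  refine ⟨θ, hθ, ?_⟩
  have h2 := ae_of_ae_map (by fun_prop) h
  rw [Measure.ae_ennreal_smul_measure_eq (by simpa using hr')] at h2
  rw [ae_restrict_iff' (measurableSet_singleton s₀).compl] at h2
  filter_upwards [h2] with s hs
  by_cases e : s = s₀
  · exact Or.inl e
  · obtain ⟨k, hk⟩ := hs e
    exact Or.inr ⟨k, by linarith⟩

/-- Under concentration, `c · Lebesgue` may be perturbed by the factor `1 + cos (θ t)` without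
changing the convolution: off `s₀` the cosine changes sign, and the two halves of the mass
cancel. -/
lemma conv_eq_of_concentrated [SFinite μ] (hR : μ {s₀}ᶜ = μ {s₀}) (c : ℝ) (θ : ℝ) (hθ : 0 < θ)
    (h : ∀ᵐ s ∂μ, s = s₀ ∨ ∃ k : ℤ, s = s₀ + Real.pi * (2 * k + 1) / θ) :
    μ.conv ((ENNReal.ofReal c • (volume : Measure ℝ)).withDensity
      fun t => ENNReal.ofReal (1 + Real.cos (θ * t))) =
    μ.conv (ENNReal.ofReal c • (volume : Measure ℝ)) := by
  have hd : Measurable fun t => ENNReal.ofReal (1 + Real.cos (θ * t)) := by fun_prop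
  refine Measure.ext_of_lintegral _ fun φ hφ => ?_
  rw [Measure.lintegral_conv hφ, Measure.lintegral_conv hφ, lintegral_split μ s₀,
    lintegral_split μ s₀]
  have hi : ∀ s, ∫⁻ t, φ (s + t) ∂((ENNReal.ofReal c • (volume : Measure ℝ)).withDensity
      fun t => ENNReal.ofReal (1 + Real.cos (θ * t))) =
      ENNReal.ofReal c * ∫⁻ u, ENNReal.ofReal (1 + Real.cos (θ * (u - s))) * φ u := fun s => by
    rw [lintegral_withDensity_eq_lintegral_mul _ hd (by fun_prop), lintegral_smul_measure,
      smul_eq_mul,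
      ← lintegral_add_left_eq_self (fun u => ENNReal.ofReal (1 + Real.cos (θ * (u - s))) * φ u) s]
    simp
  have hi' : ∀ s, ∫⁻ t, φ (s + t) ∂(ENNReal.ofReal c • (volume : Measure ℝ)) =
      ENNReal.ofReal c * ∫⁻ u, φ u := fun s => by
    rw [lintegral_smul_measure, smul_eq_mul, lintegral_add_left_eq_self]
  -- A translation by an odd multiple of `π / θ` turns the cosine into its opposite.
  have hoff : ∫⁻ s in {s₀}ᶜ, ENNReal.ofReal c *
        (∫⁻ u, ENNReal.ofReal (1 + Real.cos (θ * (u - s))) * φ u) ∂μ =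
      ∫⁻ s in {s₀}ᶜ, ENNReal.ofReal c *
        (∫⁻ u, ENNReal.ofReal (1 - Real.cos (θ * (u - s₀))) * φ u) ∂μ := by
    refine setLIntegral_congr_fun_ae (measurableSet_singleton s₀).compl ?_
    filter_upwards [h] with s hs hne
    obtain ⟨k, rfl⟩ := hs.resolve_left hne
    congr 1
    refine lintegral_congr fun u => ?_
    congr 2
    have : θ * (u - (s₀ + Real.pi * (2 * k + 1) / θ)) =
        θ * (u - s₀) - Real.pi - k * (2 * Real.pi) := by field_simp; ring
    rw [this, Real.cos_sub_int_mul_two_pi, Real.cos_sub_pi]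
    ring
  simp_rw [hi, hi']
  rw [hoff]
  simp only [lintegral_const, Measure.restrict_apply MeasurableSet.univ, univ_inter, hR]
  rw [mul_comm (μ {s₀}), ← add_mul, ← mul_add, ← lintegral_add_left (by fun_prop),
    mul_comm (μ {s₀}), ← add_mul, ← two_mul, mul_left_comm, ← lintegral_const_mul _ hφ]
  congr 2
  refine lintegral_congr fun u => ?_
  rw [← add_mul, ← ENNReal.ofReal_add (by linarith [Real.neg_one_le_cos (θ * (u - s₀))])
    (by linarith [Real.cos_le_one (θ * (u - s₀))])]
  congr 1
  ring_nf
  simp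
end

/-! ### The atom and the progression in logarithmic coordinates -/

lemma ae_logTilt_iff (α : ℝ) {ν : Measure ℝ} (h : ν (Iic 0) = 0) {p : ℝ → Prop}
    (hp : MeasurableSet {s | p s}) :
    (∀ᵐ s ∂(logTilt α ν), p s) ↔ ∀ᵐ y ∂ν, p (Real.log y) := by
  unfold logTilt
  rw [ae_map_iff Real.measurable_log.aemeasurable hp, ae_withDensity_iff (by fun_prop)]
  refine eventually_congr ?_
  filter_upwards [ae_pos h] with y hy
  have : ENNReal.ofReal (y ^ α) ≠ 0 := by simpa using Real.rpow_pos_of_pos hy α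
  simp [this]

lemma logTilt_withDensity (α : ℝ) (ν : Measure ℝ) {f : ℝ → ℝ≥0∞} (hf : Measurable f) :
    logTilt α (ν.withDensity fun y => f (Real.log y)) = (logTilt α ν).withDensity f := by
  refine Measure.ext_of_lintegral _ fun φ hφ => ?_
  rw [lintegral_logTilt _ _ hφ, lintegral_withDensity_eq_lintegral_mul _ (by fun_prop) (by fun_prop),
    lintegral_withDensity_eq_lintegral_mul _ hf hφ, lintegral_logTilt _ _ (by fun_prop)]
  refine lintegral_congr fun y => ?_
  simp only [Pi.mul_apply]
  ring

lemma logTilt_singleton (α : ℝ) {ρ : Measure ℝ} (h : ρ (Iic 0) = 0) {x₀ : ℝ} (hx₀ : 0 < x₀) :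
    logTilt α ρ {Real.log x₀} = ρ {x₀} * ENNReal.ofReal (x₀ ^ α) := by
  have hm := measurableSet_singleton (Real.log x₀)
  rw [← lintegral_indicator_one hm, lintegral_logTilt _ _ (measurable_one.indicator hm),
    mul_comm, ← lintegral_singleton (fun y => ENNReal.ofReal (y ^ α)) x₀,
    ← lintegral_indicator (measurableSet_singleton x₀)]
  refine lintegral_congr_ae ?_
  filter_upwards [ae_pos h] with y hy
  by_cases e : y = x₀
  · simp [e]
  · have : Real.log y ≠ Real.log x₀ := fun h => e (Real.log_injOn_pos hy hx₀ h)
    simp [e, this]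

lemma logTilt_compl_singleton (α : ℝ) {ρ : Measure ℝ} (h : ρ (Iic 0) = 0) {x₀ : ℝ}
    (hx₀ : 0 < x₀) :
    logTilt α ρ {Real.log x₀}ᶜ = ∫⁻ y in Ioi (0:ℝ) \ {x₀}, ENNReal.ofReal (y ^ α) ∂ρ := by
  have hm := (measurableSet_singleton (Real.log x₀)).compl
  rw [← lintegral_indicator_one hm, lintegral_logTilt _ _ (measurable_one.indicator hm),
    ← lintegral_indicator (measurableSet_Ioi.diff (measurableSet_singleton x₀))]
  refine lintegral_congr_ae ?_
  filter_upwards [ae_pos h] with y hy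
  by_cases e : y = x₀
  · simp [e]
  · have : Real.log y ≠ Real.log x₀ := fun h => e (Real.log_injOn_pos hy hx₀ h)
    simp [e, this, hy]

lemma ae_progression_iff (α : ℝ) {ρ : Measure ℝ} (h : ρ (Iic 0) = 0) {x₀ : ℝ} (hx₀ : 0 < x₀)
    (θ : ℝ) :
    (∀ᵐ s ∂(logTilt α ρ), s = Real.log x₀ ∨
      ∃ k : ℤ, s = Real.log x₀ + Real.pi * (2 * k + 1) / θ) ↔
    ρ (({x₀} ∪ {x : ℝ | ∃ k : ℤ, x = x₀ * Real.exp (Real.pi * (2 * k + 1) / θ)})ᶜ) = 0 := by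
  have hm : MeasurableSet {s | s = Real.log x₀ ∨
      ∃ k : ℤ, s = Real.log x₀ + Real.pi * (2 * k + 1) / θ} := by
    refine Countable.measurableSet ((countable_singleton (Real.log x₀)).union ?_)
    refine (countable_range fun k : ℤ => Real.log x₀ + Real.pi * (2 * k + 1) / θ).mono ?_
    rintro s ⟨k, rfl⟩
    exact ⟨k, rfl⟩
  rw [ae_logTilt_iff α h hm, ← mem_ae_iff]
  refine eventually_congr ?_
  filter_upwards [ae_pos h] with y hy
  have h1 : ∀ c, Real.log y = Real.log x₀ + c ↔ y = x₀ * Real.exp c := fun c => by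
    rw [← Real.exp_eq_exp, Real.exp_add, Real.exp_log hy, Real.exp_log hx₀]
  have h2 : Real.log y = Real.log x₀ ↔ y = x₀ := by simpa using h1 0
  rw [h2]
  simp_rw [h1]
  rfl

/-! ### The equivalence -/

lemma nuAlpha_withDensity_ne (α θ : ℝ) :
    ((nuAlpha α).withDensity fun y => ENNReal.ofReal (1 + Real.cos (θ * Real.log y))) ≠
      nuAlpha α := by
  intro he
  have h1 : ((nuAlpha α).withDensity fun y => ENNReal.ofReal (1 + Real.cos (θ * Real.log y))) =
      (nuAlpha α).withDensity 1 := by rw [he, withDensity_one]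
  rw [withDensity_eq_iff_of_sigmaFinite (by fun_prop) (by fun_prop)] at h1
  have h2 := (ae_logTilt_iff α (nuAlpha_Iic α)
    (p := fun t => ENNReal.ofReal (1 + Real.cos (θ * t)) = 1)
    (measurableSet_eq_fun (by fun_prop) (by fun_prop))).2 h1
  have hc : ENNReal.ofReal (nuConst α) ≠ 0 := by simpa using nuConst_pos α
  rw [logTilt_nuAlpha, Measure.ae_ennreal_smul_measure_eq hc] at h2
  have h3 := (Continuous.ae_eq_iff_eq (μ := volume)
    (ENNReal.continuous_ofReal.comp (by fun_prop)) continuous_const).1 h2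
  have h4 := congrFun h3 0
  norm_num at h4

/-- Corollary 2.2(ii). Suppose `ρ` has an atom `w₀ = ρ({x₀}) > 0` at
some `x₀ > 0` and `∫_{y ≠ x₀} y^α ρ(dy) = w₀ x₀^α`. Then `ρ` fails to have the
cancellation property w.r.t. `{ν_α}` iff there is `θ₀ > 0` with `ρ(S_{x₀}ᶜ) = 0`,
where `S_{x₀} = {x₀} ∪ {x₀ e^{π(2k+1)/θ₀} : k ∈ ℤ}`. -/
theorem not_cancellation_iff_concentrated
    (α : ℝ) (ρ : Measure ℝ) [SigmaFinite ρ] (hρ : ρ ≠ 0) (hsupp : ρ (Iic 0) = 0)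
    (hmom : ∃ δ : ℝ, 0 < δ ∧ MomentCond ρ α δ)
    (x₀ : ℝ) (hx₀ : 0 < x₀) (hatom : 0 < ρ {x₀})
    (heq : ∫⁻ y in Ioi (0:ℝ) \ {x₀}, ENNReal.ofReal (y ^ α) ∂ρ
        = ρ {x₀} * ENNReal.ofReal (x₀ ^ α)) :
    ¬ HasCancellation ρ α ↔ ∃ θ₀ : ℝ, 0 < θ₀ ∧
      ρ (({x₀} ∪ {x : ℝ | ∃ k : ℤ, x = x₀ * Real.exp (Real.pi * (2 * k + 1) / θ₀)})ᶜ) = 0 := by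
  have hr := logTilt_singleton α hsupp hx₀
  have hR : logTilt α ρ {Real.log x₀}ᶜ = logTilt α ρ {Real.log x₀} := by
    rw [logTilt_compl_singleton α hsupp hx₀, heq, hr]
  simp_rw [← ae_progression_iff α hsupp hx₀]
  constructor
  · intro hnc
    unfold HasCancellation at hnc
    push Not at hnc
    obtain ⟨ν, hν, hν0, he, hne⟩ := hnc
    rw [mulConv_eq_iff α ν (nuAlpha α) ρ hν0 (nuAlpha_Iic α) hsupp, logTilt_nuAlpha] at he
    refine concentrated_of_ne _ _ ?_ ?_ hR (nuConst α) (nuConst_pos α) (logTilt α ν) he ?_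
    · rw [hr]
      exact mul_ne_zero hatom.ne' (by simpa using Real.rpow_pos_of_pos hx₀ α)
    · rw [hr]
      exact ENNReal.mul_ne_top measure_singleton_lt_top.ne ENNReal.ofReal_ne_top
    · rw [← logTilt_nuAlpha]
      exact fun h => hne (logTilt_injective α hν0 (nuAlpha_Iic α) h)
  · rintro ⟨θ, hθ, h⟩ hcan
    refine nuAlpha_withDensity_ne α θ (hcan _ (SigmaFinite.withDensity_ofReal _)
      (withDensity_absolutelyContinuous _ _ (nuAlpha_Iic α)) ?_)
    rw [mulConv_eq_iff α _ _ ρ (withDensity_absolutelyContinuous _ _ (nuAlpha_Iic α))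
      (nuAlpha_Iic α) hsupp, logTilt_withDensity α (nuAlpha α)
      (f := fun t => ENNReal.ofReal (1 + Real.cos (θ * t))) (by fun_prop), logTilt_nuAlpha]
    exact conv_eq_of_concentrated _ _ hR _ θ hθ h
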